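/- Let r > 0, b ∈ ℂ, and let h be holomorphic on the disc D(0,r) with b² + 2h(0) = 0. Define q(z) = −3/(2z²) + b/z + h(z) on the punctured disc. Then there exist 0 < r' ≤ r and a holomorphic function f on D(0,r') with f(0) = 0, f'(0) = 0, f''(0) ≠ 0, and f'(z) ≠ 0 for 0 < |z| < r', such that S_f(z) = q(z) for all 0 < |z| < r'. That is, every 'admissible' Schwarzian with leading term −3/(2z²), a possible simple pole term b/z, and constant term a₀ = h(0) satisfying b² + 2a₀ = 0 is the Schwarzian of a function with a single branch point of order two at the origin. -/

import Mathlib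

/-!
If `F` is locally injective and `f' = F' / w²`, then
`S_f = S_F + 2 ((F'' / F') w' - w'') / w`. For `F = z²` this reads
`S_f = -3/(2z²) + 2 (w'/z - w'') / w`, so a branch point of order two with Schwarzian
`-3/(2z²) + b/z + h` amounts to a holomorphic `w` with `w 0 ≠ 0` and
`z w'' - w' + (b + z h) w / 2 = 0`, an equation with a regular singular point at the origin.
Evaluating it at the origin suggests writing `w' = (b/2) w + z m`. Since `h + b²/2` vanishes at the
origin it equals `z k` with `k` holomorphic, and the equation becomes the *regular* linear system
`w' = (b/2) w + z m`, `m' = -(k/2) w - (b/2) m`, which has holomorphic solutions.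
-/

open Complex Metric

/-- The Schwarzian derivative `S_f = f'''/f' - (3/2) (f''/f')²`. -/
noncomputable def schwarzian (f : ℂ → ℂ) (z : ℂ) : ℂ :=
  iteratedDeriv 3 f z / deriv f z - (3 / 2) * (iteratedDeriv 2 f z / deriv f z) ^ 2

open Filter Set Topology
open scoped Nat

theorem norm_sub_le_of_norm_hasFDerivWithinAt_le_pow {E F : Type*}
    [NormedAddCommGroup E] [NormedSpace ℝ E] [NormedAddCommGroup F] [NormedSpace ℝ F]
    {f : E → F} {f' : E → E →L[ℝ] F} {s : Set E} {c x : E} {C : ℝ} {n : ℕ}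
    (hs : StarConvex ℝ c s) (hf : ∀ y ∈ s, HasFDerivWithinAt f (f' y) s y)
    (bound : ∀ y ∈ s, ‖f' y‖ ≤ C * ‖y - c‖ ^ n) (hx : x ∈ s) :
    ‖f x - f c‖ ≤ C * ‖x - c‖ ^ (n + 1) / (n + 1) := by
  let γ : ℝ → E := fun t ↦ c + t • (x - c)
  have hγ : MapsTo γ (Icc 0 1) s := fun t ht ↦ hs.add_smul_sub_mem hx ht.1 ht.2
  have hγ' (t : ℝ) : HasDerivAt γ (x - c) t := by
    simpa [γ] using ((hasDerivAt_id t).smul_const (x - c)).const_add c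
  have hfγ : ∀ t ∈ Icc (0 : ℝ) 1,
      HasDerivWithinAt (fun t ↦ f (γ t) - f c) (f' (γ t) (x - c)) (Icc 0 1) t := fun t ht ↦
    ((hf _ (hγ ht)).comp_hasDerivWithinAt t (hγ' t).hasDerivWithinAt hγ).sub_const _
  have hB (t : ℝ) : HasDerivAt (fun t ↦ C * ‖x - c‖ ^ (n + 1) / (n + 1) * t ^ (n + 1))
      (C * ‖x - c‖ ^ (n + 1) * t ^ n) t := by
    convert! (hasDerivAt_pow (n + 1) t).const_mul (C * ‖x - c‖ ^ (n + 1) / (n + 1)) using 1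
    push_cast
    field_simp
  have hbound : ∀ t ∈ Ico (0 : ℝ) 1,
      ‖f' (γ t) (x - c)‖ ≤ C * ‖x - c‖ ^ (n + 1) * t ^ n := fun t ht ↦ calc
    ‖f' (γ t) (x - c)‖ ≤ C * ‖γ t - c‖ ^ n * ‖x - c‖ :=
      (f' (γ t)).le_of_opNorm_le (bound _ (hγ (Ico_subset_Icc_self ht))) _
    _ = C * ‖x - c‖ ^ (n + 1) * t ^ n := by
      rw [add_sub_cancel_left, norm_smul, Real.norm_of_nonneg ht.1]
      ring
  simpa [γ] using image_norm_le_of_norm_deriv_right_le_deriv_boundary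
    (fun t ht ↦ (hfγ t ht).continuousWithinAt)
    (fun t ht ↦ (hfγ t (Ico_subset_Icc_self ht)).mono_of_mem_nhdsWithin
      (Icc_mem_nhdsGE_of_mem ht))
    (by simp [γ]) hB hbound (right_mem_Icc.2 zero_le_one)

section LinearODE

variable {V : Type*} [NormedAddCommGroup V] [NormedSpace ℂ V]

/-- The terms of the Peano–Baker (Dyson) series `∑ₙ Dₙ` of the linear equation `Y' = A Y`,
`Y c = y₀`: `D₀ = y₀`, and `Dₙ₊₁` is the primitive of `A Dₙ` vanishing at `c`. The primitive is
encoded by `Complex.wedgeIntegral`, so it is meaningful on discs centred at `c`. -/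
noncomputable def peanoBakerTerm (A : ℂ → V →L[ℂ] V) (c : ℂ) (y₀ : V) : ℕ → ℂ → V
  | 0 => fun _ ↦ y₀
  | n + 1 => fun z ↦ wedgeIntegral c z fun ζ ↦ A ζ (peanoBakerTerm A c y₀ n ζ)

variable {A : ℂ → V →L[ℂ] V} {c : ℂ} {r : ℝ}

theorem peanoBakerTerm_succ_self (A : ℂ → V →L[ℂ] V) (c : ℂ) (y₀ : V) (n : ℕ) :
    peanoBakerTerm A c y₀ (n + 1) c = 0 := by
  simp [peanoBakerTerm, wedgeIntegral]

variable [CompleteSpace V]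

theorem hasDerivAt_wedgeIntegral_of_differentiableOn {f : ℂ → V}
    (hf : DifferentiableOn ℂ f (ball c r)) {z : ℂ} (hz : z ∈ ball c r) :
    HasDerivAt (fun ζ ↦ wedgeIntegral c ζ f) (f z) z :=
  hf.isConservativeOn.hasDerivAt_wedgeIntegral hf.continuousOn hz

theorem differentiableOn_peanoBakerTerm (hA : DifferentiableOn ℂ A (ball c r)) (y₀ : V) (n : ℕ) :
    DifferentiableOn ℂ (peanoBakerTerm A c y₀ n) (ball c r) := by
  induction n with
  | zero => exact differentiableOn_const y₀
  | succ n ih =>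
    exact fun z hz ↦ (hasDerivAt_wedgeIntegral_of_differentiableOn
      (hA.clm_apply ih) hz).differentiableAt.differentiableWithinAt

theorem hasDerivAt_peanoBakerTerm_succ (hA : DifferentiableOn ℂ A (ball c r)) (y₀ : V) (n : ℕ)
    {z : ℂ} (hz : z ∈ ball c r) :
    HasDerivAt (peanoBakerTerm A c y₀ (n + 1)) (A z (peanoBakerTerm A c y₀ n z)) z :=
  hasDerivAt_wedgeIntegral_of_differentiableOn
    (hA.clm_apply (differentiableOn_peanoBakerTerm hA y₀ n)) hz

theorem norm_peanoBakerTerm_le (hA : DifferentiableOn ℂ A (ball c r)) {K : ℝ}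
    (hK : ∀ z ∈ ball c r, ‖A z‖ ≤ K) (y₀ : V) (n : ℕ) {z : ℂ} (hz : z ∈ ball c r) :
    ‖peanoBakerTerm A c y₀ n z‖ ≤ ‖y₀‖ * ((K * ‖z - c‖) ^ n / n !) := by
  induction n generalizing z with
  | zero => simp [peanoBakerTerm]
  | succ n ih =>
    have hc : c ∈ ball c r := mem_ball_self (pos_of_mem_ball hz)
    have hderiv : ∀ ζ ∈ ball c r,
        ‖A ζ (peanoBakerTerm A c y₀ n ζ)‖ ≤ ‖y₀‖ * K ^ (n + 1) / n ! * ‖ζ - c‖ ^ n :=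
      fun ζ hζ ↦ calc
        _ ≤ K * (‖y₀‖ * ((K * ‖ζ - c‖) ^ n / n !)) :=
          (A ζ).le_of_opNorm_le_of_le (hK ζ hζ) (ih hζ)
        _ = ‖y₀‖ * K ^ (n + 1) / n ! * ‖ζ - c‖ ^ n := by ring
    calc ‖peanoBakerTerm A c y₀ (n + 1) z‖
        = ‖peanoBakerTerm A c y₀ (n + 1) z - peanoBakerTerm A c y₀ (n + 1) c‖ := by
          rw [peanoBakerTerm_succ_self, sub_zero]
      _ ≤ ‖y₀‖ * K ^ (n + 1) / n ! * ‖z - c‖ ^ (n + 1) / (n + 1) :=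
          norm_sub_le_of_norm_hasFDerivWithinAt_le_pow ((convex_ball c r).starConvex hc)
            (fun ζ hζ ↦ ((hasDerivAt_peanoBakerTerm_succ hA y₀ n hζ).hasFDerivAt.restrictScalars
              ℝ).hasFDerivWithinAt)
            (fun ζ hζ ↦ by simpa using hderiv ζ hζ) hz
      _ = ‖y₀‖ * ((K * ‖z - c‖) ^ (n + 1) / (n + 1)!) := by
          rw [Nat.factorial_succ, mul_pow]
          push_cast
          field_simp

theorem exists_summable_norm_peanoBakerTerm_le (hA : DifferentiableOn ℂ A (ball c r)) {K : ℝ}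
    (hK : ∀ z ∈ ball c r, ‖A z‖ ≤ K) (y₀ : V) :
    ∃ u : ℕ → ℝ, Summable u ∧ ∀ n, ∀ z ∈ ball c r, ‖peanoBakerTerm A c y₀ n z‖ ≤ u n := by
  refine ⟨fun n ↦ ‖y₀‖ * ((K * r) ^ n / n !),
    (Real.summable_pow_div_factorial (K * r)).mul_left ‖y₀‖, fun n z hz ↦ ?_⟩
  have hK₀ : 0 ≤ K := (norm_nonneg _).trans (hK z hz)
  calc ‖peanoBakerTerm A c y₀ n z‖
      ≤ ‖y₀‖ * ((K * ‖z - c‖) ^ n / n !) := norm_peanoBakerTerm_le hA hK y₀ n hz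
    _ ≤ ‖y₀‖ * ((K * r) ^ n / n !) := by gcongr; exact (mem_ball_iff_norm.1 hz).le

theorem hasDerivAt_tsum_peanoBakerTerm (hA : DifferentiableOn ℂ A (ball c r)) {K : ℝ}
    (hK : ∀ z ∈ ball c r, ‖A z‖ ≤ K) (y₀ : V) {z : ℂ} (hz : z ∈ ball c r) :
    HasDerivAt (fun ζ ↦ ∑' n, peanoBakerTerm A c y₀ n ζ)
      (A z (∑' n, peanoBakerTerm A c y₀ n z)) z := by
  obtain ⟨u, hu, hDu⟩ := exists_summable_norm_peanoBakerTerm_le hA hK y₀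
  have hsum : ∀ ζ ∈ ball c r, Summable fun n ↦ peanoBakerTerm A c y₀ n ζ := fun ζ hζ ↦
    .of_norm_bounded hu fun n ↦ hDu n ζ hζ
  have htail : HasDerivAt (fun ζ ↦ ∑' n, peanoBakerTerm A c y₀ (n + 1) ζ)
      (∑' n, A z (peanoBakerTerm A c y₀ n z)) z :=
    hasDerivAt_tsum_of_isPreconnected (hu.mul_left K) isOpen_ball (convex_ball c r).isPreconnected
      (fun n ζ hζ ↦ hasDerivAt_peanoBakerTerm_succ hA y₀ n hζ)
      (fun n ζ hζ ↦ (A ζ).le_of_opNorm_le_of_le (hK ζ hζ) (hDu n ζ hζ))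
      (mem_ball_self (pos_of_mem_ball hz)) (by simp [peanoBakerTerm_succ_self, summable_zero]) hz
  rw [(A z).map_tsum (hsum z hz)]
  refine (htail.const_add y₀).congr_of_eventuallyEq ?_
  filter_upwards [isOpen_ball.mem_nhds hz] with ζ hζ
  exact (hsum ζ hζ).tsum_eq_zero_add

theorem exists_hasDerivAt_clm_apply (hA : DifferentiableOn ℂ A (ball c r)) (y₀ : V) :
    ∃ Y : ℂ → V, Y c = y₀ ∧ ∀ z ∈ ball c r, HasDerivAt Y (A z (Y z)) z := by
  refine ⟨fun z ↦ ∑' n, peanoBakerTerm A c y₀ n z, ?_, fun z hz ↦ ?_⟩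
  · refine tsum_eq_single 0 fun n hn ↦ ?_
    obtain ⟨m, rfl⟩ := Nat.exists_eq_succ_of_ne_zero hn
    exact peanoBakerTerm_succ_self A c y₀ m
  · obtain ⟨s, hzs, hsr⟩ := exists_between (mem_ball.1 hz)
    obtain ⟨K, hK⟩ := (isCompact_closedBall c s).exists_bound_of_continuousOn
      (hA.continuousOn.mono (closedBall_subset_ball hsr))
    exact hasDerivAt_tsum_peanoBakerTerm (hA.mono (ball_subset_ball hsr.le))
      (fun ζ hζ ↦ hK ζ (ball_subset_closedBall hζ)) y₀ hzs

end LinearODE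

theorem exists_hasDerivAt_linear_system {a₁₁ a₁₂ a₂₁ a₂₂ : ℂ → ℂ} {c : ℂ} {r : ℝ}
    (h₁₁ : DifferentiableOn ℂ a₁₁ (ball c r)) (h₁₂ : DifferentiableOn ℂ a₁₂ (ball c r))
    (h₂₁ : DifferentiableOn ℂ a₂₁ (ball c r)) (h₂₂ : DifferentiableOn ℂ a₂₂ (ball c r))
    (u₀ v₀ : ℂ) :
    ∃ u v : ℂ → ℂ, u c = u₀ ∧ v c = v₀ ∧ ∀ z ∈ ball c r,
      HasDerivAt u (a₁₁ z * u z + a₁₂ z * v z) z ∧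
      HasDerivAt v (a₂₁ z * u z + a₂₂ z * v z) z := by
  let p₁ := ContinuousLinearMap.fst ℂ ℂ ℂ
  let p₂ := ContinuousLinearMap.snd ℂ ℂ ℂ
  let i₁ := ContinuousLinearMap.inl ℂ ℂ ℂ
  let i₂ := ContinuousLinearMap.inr ℂ ℂ ℂ
  have hA := (((h₁₁.smul_const (i₁ ∘L p₁)).add (h₁₂.smul_const (i₁ ∘L p₂))).add
    (h₂₁.smul_const (i₂ ∘L p₁))).add (h₂₂.smul_const (i₂ ∘L p₂))
  obtain ⟨Y, hY₀, hY⟩ := exists_hasDerivAt_clm_apply hA (u₀, v₀)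
  refine ⟨fun z ↦ (Y z).1, fun z ↦ (Y z).2, by simp [hY₀], by simp [hY₀], fun z hz ↦ ⟨?_, ?_⟩⟩
  · simpa [p₁, p₂, i₁, i₂] using (hY z hz).hasFDerivAt.fst.hasDerivAt
  · simpa [p₁, p₂, i₁, i₂] using (hY z hz).hasFDerivAt.snd.hasDerivAt

theorem logDeriv_eq_sub_of_eventuallyEq_div_pow {𝕜 : Type*} [NontriviallyNormedField 𝕜]
    {f g w : 𝕜 → 𝕜} {z : 𝕜} {n : ℕ} (hg : DifferentiableAt 𝕜 g z) (hgz : g z ≠ 0)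
    (hw : DifferentiableAt 𝕜 w z) (hwz : w z ≠ 0) (hf : f =ᶠ[𝓝 z] fun ζ ↦ g ζ / w ζ ^ n) :
    logDeriv f z = logDeriv g z - n * logDeriv w z := by
  rw [(logDeriv_congr_nhds hf).eq_of_nhds,
    logDeriv_div (g := fun ζ ↦ w ζ ^ n) z hgz (pow_ne_zero n hwz) hg (hw.fun_pow n),
    logDeriv_fun_pow hw]

section Schwarzian

variable {f F w : ℂ → ℂ} {z : ℂ}

theorem schwarzian_eq_deriv_logDeriv (hf : AnalyticAt ℂ f z) (hz : deriv f z ≠ 0) :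
    schwarzian f z = deriv (logDeriv (deriv f)) z - logDeriv (deriv f) z ^ 2 / 2 := by
  have hdiv : deriv (logDeriv (deriv f)) z = _ :=
    deriv_div hf.deriv.deriv.differentiableAt hf.deriv.differentiableAt hz
  simp only [schwarzian, iteratedDeriv_succ, iteratedDeriv_zero, hdiv, logDeriv_apply]
  field_simp
  ring

theorem logDeriv_deriv_pow {n : ℕ} (hn : n ≠ 0) :
    logDeriv (deriv fun ζ : ℂ ↦ ζ ^ n) = fun ζ ↦ (n - 1 : ℂ) / ζ := by
  have hderiv : deriv (fun ζ : ℂ ↦ ζ ^ n) = fun ζ ↦ (n : ℂ) * ζ ^ (n - 1) := by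
    ext ζ
    simp
  ext ζ
  rw [hderiv, logDeriv_const_mul ζ _ (Nat.cast_ne_zero.2 hn), logDeriv_pow,
    Nat.cast_pred (Nat.pos_of_ne_zero hn)]

theorem schwarzian_pow {n : ℕ} (hn : n ≠ 0) (hz : z ≠ 0) :
    schwarzian (· ^ n) z = (1 - n ^ 2) / (2 * z ^ 2) := by
  rw [schwarzian_eq_deriv_logDeriv (by fun_prop) (by simp [hn, hz]), logDeriv_deriv_pow hn,
    deriv_fun_div (differentiableAt_const _) differentiableAt_fun_id hz]
  simp only [deriv_const, deriv_id'']
  field_simp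
  ring

theorem schwarzian_eq_add_of_hasDerivAt_div_sq (hF : AnalyticAt ℂ F z) (hFz : deriv F z ≠ 0)
    (hw : AnalyticAt ℂ w z) (hwz : w z ≠ 0)
    (hf : ∀ᶠ ζ in 𝓝 z, HasDerivAt f (deriv F ζ / w ζ ^ 2) ζ) :
    schwarzian f z =
      schwarzian F z + 2 * (logDeriv (deriv F) z * deriv w z - deriv (deriv w) z) / w z := by
  have hfF : deriv f =ᶠ[𝓝 z] fun ζ ↦ deriv F ζ / w ζ ^ 2 := hf.mono fun _ hζ ↦ hζ.deriv
  have hfz : deriv f z ≠ 0 := hfF.eq_of_nhds ▸ div_ne_zero hFz (pow_ne_zero 2 hwz)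
  have hfan : AnalyticAt ℂ f z :=
    analyticAt_iff_eventually_differentiableAt.2 (hf.mono fun _ hζ ↦ hζ.differentiableAt)
  have hlog : logDeriv (deriv f) =ᶠ[𝓝 z] fun ζ ↦ logDeriv (deriv F) ζ - 2 * logDeriv w ζ := by
    filter_upwards [hfF.eventuallyEq_nhds, hF.deriv.eventually_analyticAt,
      hw.eventually_analyticAt, hF.deriv.continuousAt.eventually_ne hFz,
      hw.continuousAt.eventually_ne hwz] with ζ hfζ hFζ hwζ hFζ₀ hwζ₀
    exact_mod_cast logDeriv_eq_sub_of_eventuallyEq_div_pow hFζ.differentiableAt hFζ₀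
      hwζ.differentiableAt hwζ₀ hfζ
  have hFlog : DifferentiableAt ℂ (logDeriv (deriv F)) z :=
    hF.deriv.deriv.differentiableAt.div hF.deriv.differentiableAt hFz
  have hwlog : DifferentiableAt ℂ (logDeriv w) z :=
    hw.deriv.differentiableAt.div hw.differentiableAt hwz
  have hwlog' : deriv (logDeriv w) z = _ :=
    deriv_div hw.deriv.differentiableAt hw.differentiableAt hwz
  rw [schwarzian_eq_deriv_logDeriv hfan hfz, schwarzian_eq_deriv_logDeriv hF hFz, hlog.deriv_eq,
    hlog.eq_of_nhds, deriv_fun_sub hFlog (hwlog.const_mul 2), deriv_const_mul _ hwlog, hwlog',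
    logDeriv_apply w]
  field_simp
  ring

end Schwarzian

theorem exists_hasDerivAt_div_pow {g w : ℂ → ℂ} {c : ℂ} {r : ℝ} (hr : 0 < r)
    (hg : DifferentiableOn ℂ g (ball c r)) (hw : DifferentiableOn ℂ w (ball c r))
    (hwc : w c ≠ 0) (n : ℕ) (y₀ : ℂ) :
    ∃ r', 0 < r' ∧ r' ≤ r ∧ (∀ z ∈ ball c r', w z ≠ 0) ∧
      ∃ f : ℂ → ℂ, f c = y₀ ∧ ∀ z ∈ ball c r', HasDerivAt f (g z / w z ^ n) z := by
  obtain ⟨δ, hδ, hwδ⟩ := eventually_nhds_iff_ball.1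
    ((hw.differentiableAt (ball_mem_nhds c hr)).continuousAt.eventually_ne hwc)
  have hsub : ball c (min r δ) ⊆ ball c r := ball_subset_ball (min_le_left r δ)
  have hw_ne : ∀ z ∈ ball c (min r δ), w z ≠ 0 := fun z hz ↦
    hwδ z (ball_subset_ball (min_le_right r δ) hz)
  have hquot : DifferentiableOn ℂ (fun z ↦ g z / w z ^ n) (ball c (min r δ)) :=
    (hg.mono hsub).fun_div ((hw.mono hsub).fun_pow n) fun z hz ↦ pow_ne_zero n (hw_ne z hz)
  exact ⟨min r δ, lt_min hr hδ, min_le_left r δ, hw_ne, hquot.isExactOn_ball.with_val_at c y₀⟩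

section BranchPoint

variable {f F w m : ℂ → ℂ} {b c κ z : ℂ}

theorem iteratedDeriv_two_eq_div_sq_of_deriv_eq_zero (hF : DifferentiableAt ℂ (deriv F) c)
    (hFc : deriv F c = 0) (hw : DifferentiableAt ℂ w c) (hwc : w c ≠ 0)
    (hf : ∀ᶠ ζ in 𝓝 c, HasDerivAt f (deriv F ζ / w ζ ^ 2) ζ) :
    iteratedDeriv 2 f c = iteratedDeriv 2 F c / w c ^ 2 := by
  have hfF : deriv f =ᶠ[𝓝 c] fun ζ ↦ deriv F ζ / w ζ ^ 2 := hf.mono fun _ hζ ↦ hζ.deriv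
  rw [iteratedDeriv_succ, iteratedDeriv_one, hfF.deriv_eq,
    deriv_fun_div hF (hw.fun_pow 2) (pow_ne_zero 2 hwc), hFc, iteratedDeriv_succ,
    iteratedDeriv_one]
  field_simp
  ring

theorem deriv_deriv_eq_of_hasDerivAt_system
    (hw : ∀ᶠ ζ in 𝓝 z, HasDerivAt w (b / 2 * w ζ + ζ * m ζ) ζ)
    (hm : HasDerivAt m (-(κ / 2) * w z + -(b / 2) * m z) z) :
    deriv (deriv w) z = (b ^ 2 / 4 - z * κ / 2) * w z + m z := by
  have hw' : deriv w =ᶠ[𝓝 z] fun ζ ↦ b / 2 * w ζ + ζ * m ζ := hw.mono fun _ hζ ↦ hζ.deriv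
  have hw'' := (hw.self_of_nhds.const_mul (b / 2)).fun_add ((hasDerivAt_id' z).fun_mul hm)
  rw [hw'.deriv_eq, hw''.deriv]
  ring

theorem schwarzian_eq_of_hasDerivAt_system (hz : z ≠ 0) (hwz : w z ≠ 0)
    (hw : ∀ᶠ ζ in 𝓝 z, HasDerivAt w (b / 2 * w ζ + ζ * m ζ) ζ)
    (hm : HasDerivAt m (-(κ / 2) * w z + -(b / 2) * m z) z)
    (hf : ∀ᶠ ζ in 𝓝 z, HasDerivAt f (deriv (· ^ 2) ζ / w ζ ^ 2) ζ) :
    schwarzian f z = -3 / (2 * z ^ 2) + b / z + (z * κ - b ^ 2 / 2) := by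
  have hwan : AnalyticAt ℂ w z :=
    analyticAt_iff_eventually_differentiableAt.2 (hw.mono fun _ hζ ↦ hζ.differentiableAt)
  rw [schwarzian_eq_add_of_hasDerivAt_div_sq (by fun_prop) (by simpa using hz) hwan hwz hf,
    schwarzian_pow two_ne_zero hz, logDeriv_deriv_pow two_ne_zero, hw.self_of_nhds.deriv,
    deriv_deriv_eq_of_hasDerivAt_system hw hm]
  field_simp
  ring

end BranchPoint

theorem eq_mul_dslope_sub_of_sq_add_two_mul_eq_zero {b : ℂ} {h : ℂ → ℂ}
    (hcoeff : b ^ 2 + 2 * h 0 = 0) (z : ℂ) : h z = z * dslope h 0 z - b ^ 2 / 2 := by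
  have hslope : z * dslope h 0 z = h z - h 0 := by simpa using sub_smul_dslope h 0 z
  linear_combination -hslope + hcoeff / 2

/-- Every admissible Schwarzian `q(z) = -3/(2z²) + b/z + h(z)`, with `h` holomorphic
and `b² + 2 h(0) = 0`, is locally the Schwarzian derivative of a holomorphic function
with a single branch point of order two at the origin. -/
theorem admissible_schwarzian_has_branched_solution (r : ℝ) (hr : 0 < r)
    (b : ℂ) (h : ℂ → ℂ) (hh : DifferentiableOn ℂ h (ball (0 : ℂ) r))
    (hcoeff : b ^ 2 + 2 * h 0 = 0) :
    ∃ r' : ℝ, 0 < r' ∧ r' ≤ r ∧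
      ∃ f : ℂ → ℂ, DifferentiableOn ℂ f (ball (0 : ℂ) r') ∧
        f 0 = 0 ∧ deriv f 0 = 0 ∧ iteratedDeriv 2 f 0 ≠ 0 ∧
        ∀ z ∈ ball (0 : ℂ) r', z ≠ 0 →
          deriv f z ≠ 0 ∧ schwarzian f z = -3 / (2 * z ^ 2) + b / z + h z := by
  have hk : DifferentiableOn ℂ (dslope h 0) (ball 0 r) :=
    (differentiableOn_dslope (ball_mem_nhds 0 hr)).2 hh
  obtain ⟨w, m, hw₀, -, hwm⟩ := exists_hasDerivAt_linear_system (differentiableOn_const (b / 2))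
    differentiableOn_id (hk.div_const 2).fun_neg (differentiableOn_const (-(b / 2))) 1 0
  have hw : DifferentiableOn ℂ w (ball 0 r) := fun z hz ↦
    (hwm z hz).1.differentiableAt.differentiableWithinAt
  obtain ⟨r', hr', hr'r, hw_ne, f, hf₀, hf⟩ :=
    exists_hasDerivAt_div_pow (g := deriv (· ^ 2)) hr
      (DifferentiableOn.deriv (by fun_prop) isOpen_ball) hw (by simp [hw₀]) 2 0
  have h0 : (0 : ℂ) ∈ ball (0 : ℂ) r' := mem_ball_self hr'
  have hf_ev : ∀ z ∈ ball (0 : ℂ) r', ∀ᶠ ζ in 𝓝 z, HasDerivAt f (deriv (· ^ 2) ζ / w ζ ^ 2) ζ :=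
    fun z hz ↦ eventually_of_mem (isOpen_ball.mem_nhds hz) hf
  refine ⟨r', hr', hr'r, f, fun z hz ↦ (hf z hz).differentiableAt.differentiableWithinAt, hf₀,
    by simp [(hf 0 h0).deriv], ?_, fun z hz hz₀ ↦ ⟨?_, ?_⟩⟩
  · rw [iteratedDeriv_two_eq_div_sq_of_deriv_eq_zero (F := (· ^ 2)) (by fun_prop) (by simp)
      (hw.differentiableAt (ball_mem_nhds 0 hr)) (hw_ne 0 h0) (hf_ev 0 h0)]
    simp [hw₀]
  · simpa [(hf z hz).deriv] using ⟨hz₀, hw_ne z hz⟩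
  · have hzr : z ∈ ball (0 : ℂ) r := ball_subset_ball hr'r hz
    rw [eq_mul_dslope_sub_of_sq_add_two_mul_eq_zero hcoeff z]
    exact schwarzian_eq_of_hasDerivAt_system hz₀ (hw_ne z hz)
      (eventually_of_mem (isOpen_ball.mem_nhds hzr) fun ζ hζ ↦ (hwm ζ hζ).1) (hwm z hzr).2
      (hf_ev z hz)
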